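/- For every a ≥ 1 and every k ≥ 1, the k-th Dirichlet biharmonic eigenvalue of the rectangle R_a satisfies λ_k(a)^{1/2} ≥ 4πk + 2a·λ_k(a)^{1/4} − (4√(2π)/(3√3))·a^{3/2}·λ_k(a)^{1/8}. -/

import Mathlib

open MeasureTheory Real Filter

noncomputable section

/-- Directional (partial) derivative of `u : ℝ × ℝ → ℝ` in direction `v`. -/
def pd (v : ℝ × ℝ) (u : ℝ × ℝ → ℝ) : ℝ × ℝ → ℝ := fun p => fderiv ℝ u p v

/-- Second partial derivative `∂²u/∂x²`. -/
def uxx (u : ℝ × ℝ → ℝ) : ℝ × ℝ → ℝ := pd (1, 0) (pd (1, 0) u)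

/-- Second partial derivative `∂²u/∂y²`. -/
def uyy (u : ℝ × ℝ → ℝ) : ℝ × ℝ → ℝ := pd (0, 1) (pd (0, 1) u)

/-- Mixed second partial derivative `∂²u/∂x∂y`. -/
def uxy (u : ℝ × ℝ → ℝ) : ℝ × ℝ → ℝ := pd (0, 1) (pd (1, 0) u)

/-- The Laplacian `Δu = u_xx + u_yy`. -/
def lap (u : ℝ × ℝ → ℝ) : ℝ × ℝ → ℝ := fun p => uxx u p + uyy u p

/-- The open rectangle `R_a = (0,a) × (0,1/a)` of unit area. -/
def Rect (a : ℝ) : Set (ℝ × ℝ) := Set.Ioo 0 a ×ˢ Set.Ioo 0 (1 / a)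

/-- Admissible test functions: smooth, compactly supported inside `Ω`. -/
def Adm (Ω : Set (ℝ × ℝ)) (u : ℝ × ℝ → ℝ) : Prop :=
  ContDiff ℝ (⊤ : ℕ∞) u ∧ HasCompactSupport u ∧ tsupport u ⊆ Ω

/-- First Dirichlet eigenvalue of the biharmonic operator on `R_a`,
characterized variationally as the infimum of the Rayleigh quotient. -/
def lam1 (a : ℝ) : ℝ :=
  sInf { μ | ∃ u : ℝ × ℝ → ℝ, Adm (Rect a) u ∧ u ≠ 0 ∧
    μ = (∫ p, (lap u p) ^ 2) / (∫ p, (u p) ^ 2) }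

/-- `k`-th Dirichlet eigenvalue of the biharmonic operator on `R_a`:
infimum over linearly independent `k`-tuples of admissible functions of the
maximum of the Rayleigh quotient over nonzero linear combinations. -/
def lamk (k : ℕ) (a : ℝ) : ℝ :=
  sInf { μ | ∃ u : Fin k → (ℝ × ℝ → ℝ), (∀ i, Adm (Rect a) (u i)) ∧
    LinearIndependent ℝ u ∧
    μ = sSup { r | ∃ c : Fin k → ℝ, c ≠ 0 ∧
      r = (∫ p, (lap (fun q => ∑ i, c i * u i q) p) ^ 2) /
          (∫ p, (∑ i, c i * u i p) ^ 2) } }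

/-!
The products of the Dirichlet sine modes of the two sides of a rectangle satisfy Parseval's
identity, and the Laplacian multiplies each of them by minus a Laplace eigenvalue. Hence a nonzero
test function with no component along the modes of eigenvalue at most `s` has biharmonic Rayleigh
quotient larger than `s ^ 2`. If the maximal quotient on a `k`-dimensional space is `σ`, then by
linear algebra there are at least `k` modes of eigenvalue at most `√σ`.

These modes are the positive lattice points in an ellipse. Counted along lines parallel to one
axis they are at most a sum of values of the concave function `√(R ^ 2 - x ^ 2)` at the integers
`1, …, ⌊R⌋`, and the trapezoid rule bounds that sum by the area minus `R / 2`, up to the last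
partial cell. With `θ = R - ⌊R⌋`, that cell costs at most a constant times
`(1 - θ) * √θ * √R`, and `(1 - θ) * √θ ≤ 2 / (3 * √3)` produces the constant of the theorem.
-/

/-! ### Parseval frames -/

section ParsevalFrame

variable {α β ι κ : Type*} [MeasurableSpace α] [MeasurableSpace β]
  {μ : Measure α} {ν : Measure β}

/-- A family of square integrable functions satisfying Parseval's identity. It need not be
orthonormal; in exchange the notion is stable under tensor products with a short proof, and it
can be applied to functions rather than to their `Lp` classes. -/
structure IsParsevalFrame (μ : Measure α) (e : ι → α → ℝ) : Prop where
  memLp : ∀ i, MemLp (e i) 2 μ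
  hasSum : ∀ {f : α → ℝ}, MemLp f 2 μ →
    HasSum (fun i => (∫ x, f x * e i x ∂μ) ^ 2) (∫ x, f x ^ 2 ∂μ)

theorem hasSum_of_tsum_ofReal_eq {a : ι → ℝ} {A : ℝ} (ha : ∀ i, 0 ≤ a i) (hA : 0 ≤ A)
    (h : ∑' i, ENNReal.ofReal (a i) = ENNReal.ofReal A) : HasSum a A := by
  have hsum : Summable a := by
    simpa only [ENNReal.toReal_ofReal (ha _)] using
      ENNReal.summable_toReal (h.trans_ne ENNReal.ofReal_ne_top)
  rw [← ENNReal.ofReal_tsum_of_nonneg ha hsum,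
    ENNReal.ofReal_eq_ofReal_iff (tsum_nonneg ha) hA] at h
  exact h ▸ hsum.hasSum

namespace IsParsevalFrame

theorem tsum_ofReal_sq_coeff {e : ι → α → ℝ} (he : IsParsevalFrame μ e) {f : α → ℝ}
    (hf : MemLp f 2 μ) :
    ∑' i, ENNReal.ofReal ((∫ x, f x * e i x ∂μ) ^ 2) = ∫⁻ x, ENNReal.ofReal (f x ^ 2) ∂μ := by
  rw [← ofReal_integral_eq_lintegral_ofReal hf.integrable_sq (ae_of_all _ fun x => sq_nonneg _),
    ← (he.hasSum hf).tsum_eq, ENNReal.ofReal_tsum_of_nonneg (fun i => sq_nonneg _)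
      (he.hasSum hf).summable]

theorem sq_coeff_le {e : ι → α → ℝ} (he : IsParsevalFrame μ e) {f : α → ℝ}
    (hf : MemLp f 2 μ) (i : ι) : (∫ x, f x * e i x ∂μ) ^ 2 ≤ ∫ x, f x ^ 2 ∂μ :=
  le_hasSum (he.hasSum hf) i fun _ _ => sq_nonneg _

end IsParsevalFrame

theorem memLp_two_tensor [SFinite μ] [SFinite ν] {f : α → ℝ} {g : β → ℝ} (hf : MemLp f 2 μ)
    (hg : MemLp g 2 ν) : MemLp (fun q : α × β => f q.1 * g q.2) 2 (μ.prod ν) := by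
  refine (memLp_two_iff_integrable_sq (hf.1.comp_fst.mul hg.1.comp_snd)).2 ?_
  simpa only [Pi.mul_apply, mul_pow] using hf.integrable_sq.mul_prod hg.integrable_sq

theorem ae_memLp_two_prodMk_left [SFinite μ] [SFinite ν] {g : α × β → ℝ}
    (hg : MemLp g 2 (μ.prod ν)) :
    ∀ᵐ x ∂μ, MemLp (fun y => g (x, y)) 2 ν := by
  filter_upwards [hg.1.prodMk_left, hg.integrable_sq.prod_right_ae] with x hmeas hint
  exact (memLp_two_iff_integrable_sq hmeas).2 hint

namespace IsParsevalFrame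

theorem memLp_coeff_slice [SFinite μ] [SFinite ν] {f : κ → β → ℝ}
    (hf : IsParsevalFrame ν f) {g : α × β → ℝ} (hg : MemLp g 2 (μ.prod ν)) (n : κ) :
    MemLp (fun x => ∫ y, g (x, y) * f n y ∂ν) 2 μ := by
  have hmeas : AEStronglyMeasurable (fun x => ∫ y, g (x, y) * f n y ∂ν) μ :=
    (hg.1.mul (hf.memLp n).1.comp_snd).integral_prod_right'
  refine (memLp_two_iff_integrable_sq hmeas).2
    (hg.integrable_sq.integral_prod_left.mono' (hmeas.pow 2) ?_)
  filter_upwards [ae_memLp_two_prodMk_left hg] with x hx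
  simpa only [norm_pow, Real.norm_eq_abs, sq_abs] using hf.sq_coeff_le hx n

theorem prod [SFinite μ] [SFinite ν] [Countable κ] {e : ι → α → ℝ}
    {f : κ → β → ℝ} (he : IsParsevalFrame μ e) (hf : IsParsevalFrame ν f) :
    IsParsevalFrame (μ.prod ν) fun (p : ι × κ) q => e p.1 q.1 * f p.2 q.2 where
  memLp p := memLp_two_tensor (he.memLp p.1) (hf.memLp p.2)
  hasSum {g} hg := by
    let b : κ → α → ℝ := fun n x => ∫ y, g (x, y) * f n y ∂ν
    have hb : ∀ n, MemLp (b n) 2 μ := hf.memLp_coeff_slice hg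
    have coeff_eq : ∀ m n, ∫ q, g q * (e m q.1 * f n q.2) ∂μ.prod ν = ∫ x, b n x * e m x ∂μ := by
      intro m n
      refine (integral_prod _
        (hg.integrable_mul (memLp_two_tensor (he.memLp m) (hf.memLp n)))).trans ?_
      refine integral_congr_ae (ae_of_all _ fun x => ?_)
      simp only [b, ← integral_mul_const]
      exact integral_congr_ae (ae_of_all _ fun y => by simp only [Pi.mul_apply]; ring)
    refine hasSum_of_tsum_ofReal_eq (fun _ => sq_nonneg _)
      (integral_nonneg fun _ => sq_nonneg _) ?_
    calc ∑' p : ι × κ, ENNReal.ofReal ((∫ q, g q * (e p.1 q.1 * f p.2 q.2) ∂μ.prod ν) ^ 2)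
        = ∑' n, ∑' m, ENNReal.ofReal ((∫ x, b n x * e m x ∂μ) ^ 2) := by
          simp_rw [coeff_eq]
          rw [ENNReal.tsum_prod', ENNReal.tsum_comm]
      _ = ∑' n, ∫⁻ x, ENNReal.ofReal (b n x ^ 2) ∂μ := by
          simp_rw [he.tsum_ofReal_sq_coeff (hb _)]
      _ = ∫⁻ x, ∑' n, ENNReal.ofReal (b n x ^ 2) ∂μ :=
          (lintegral_tsum fun n => ((hb n).1.aemeasurable.pow_const 2).ennreal_ofReal).symm
      _ = ∫⁻ x, ∫⁻ y, ENNReal.ofReal (g (x, y) ^ 2) ∂ν ∂μ := by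
          refine lintegral_congr_ae ?_
          filter_upwards [ae_memLp_two_prodMk_left hg] with x hx
          exact hf.tsum_ofReal_sq_coeff hx
      _ = ∫⁻ q, ENNReal.ofReal (g q ^ 2) ∂μ.prod ν :=
          (lintegral_prod _ (hg.1.aemeasurable.pow_const 2).ennreal_ofReal).symm
      _ = ENNReal.ofReal (∫ q, g q ^ 2 ∂μ.prod ν) :=
          (ofReal_integral_eq_lintegral_ofReal hg.integrable_sq
            (ae_of_all _ fun _ => sq_nonneg _)).symm

end IsParsevalFrame

end ParsevalFrame

/-! ### Sine series on an interval -/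

/-- The `n`-th normalised Dirichlet eigenfunction of the interval `(0, L)`, counting from `n = 0`;
it oscillates with frequency `(n + 1) π / L`. -/
def sineMode (L : ℝ) (n : ℕ) (x : ℝ) : ℝ := √(2 / L) * sin ((n + 1) * (π / L) * x)

/-- The function `f x - f (-x)`: the odd extension of `f` to the line when `f` vanishes on the
negative half-line. -/
def oddExtension (f : ℝ → ℝ) (x : ℝ) : ℝ := f x - f (-x)

theorem memLp_oddExtension {f : ℝ → ℝ} (hf : MemLp f 2) : MemLp (oddExtension f) 2 :=
  hf.sub (hf.comp_measurePreserving (Measure.measurePreserving_neg volume))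

theorem integral_oddExtension_mul {f : ℝ → ℝ} {e : ℝ → ℂ}
    (h : Integrable fun x => (f x : ℂ) * e x) (h' : Integrable fun x => (f x : ℂ) * e (-x)) :
    ∫ x, (oddExtension f x : ℂ) * e x = ∫ x, (f x : ℂ) * (e x - e (-x)) := by
  have hneg : Integrable fun x => (f (-x) : ℂ) * e x := by simpa only [neg_neg] using h'.comp_neg
  have hflip : ∫ x, (f (-x) : ℂ) * e x = ∫ x, (f x : ℂ) * e (-x) := by
    rw [← integral_neg_eq_self]
    simp only [neg_neg]
  simp only [oddExtension, Complex.ofReal_sub, sub_mul, mul_sub]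
  rw [integral_sub h hneg, integral_sub h h', hflip]

theorem integral_sq_oddExtension {f : ℝ → ℝ} (hf : MemLp f 2) (h : ∀ x, f x * f (-x) = 0) :
    ∫ x, oddExtension f x ^ 2 = 2 * ∫ x, f x ^ 2 := by
  have hsq : ∀ x, oddExtension f x ^ 2 = f x ^ 2 + f (-x) ^ 2 := fun x => by
    unfold oddExtension
    linear_combination -2 * h x
  simp_rw [hsq]
  rw [integral_add hf.integrable_sq hf.integrable_sq.comp_neg,
    integral_neg_eq_self (fun x => f x ^ 2), two_mul]

section OddExtension

variable {L : ℝ} {f : ℝ → ℝ}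

theorem oddExtension_eq_zero_of_notMem_Ioc (hf : Function.support f ⊆ Set.Ioo 0 L) {x : ℝ}
    (hx : x ∉ Set.Ioc (-L) L) : oddExtension f x = 0 := by
  have hfx : f x = 0 := Function.notMem_support.1 fun h =>
    hx ⟨by linarith [(hf h).1, (hf h).2], (hf h).2.le⟩
  have hfnx : f (-x) = 0 := Function.notMem_support.1 fun h =>
    hx ⟨by linarith [(hf h).2], by linarith [(hf h).1, (hf h).2]⟩
  rw [oddExtension, hfx, hfnx, sub_zero]

theorem mul_comp_neg_eq_zero (hf : Function.support f ⊆ Set.Ioi 0) (x : ℝ) :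
    f x * f (-x) = 0 := by
  by_contra hne
  have hx : 0 < x := hf (left_ne_zero_of_mul hne)
  have hnx : 0 < -x := hf (right_ne_zero_of_mul hne)
  linarith

theorem fourier_neg_apply_symmetric_period (hL : L ≠ 0) (n : ℤ) (x : ℝ) :
    (fourier (-n) (x : AddCircle (L - -L)) : ℂ) = Complex.exp (-(n * (π / L) * x) * Complex.I) := by
  rw [fourier_coe_apply]
  have hL' : (L : ℂ) ≠ 0 := mod_cast hL
  congr 1
  push_cast
  field_simp
  ring

theorem fourierCoeffOn_oddExtension (hL : 0 < L) (hint : Integrable f)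
    (hf : Function.support f ⊆ Set.Ioo 0 L) (n : ℤ) :
    fourierCoeffOn (neg_lt_self hL) (fun x => (oddExtension f x : ℂ)) n
      = -(Complex.I / L) * (∫ x, f x * sin (n * (π / L) * x) : ℝ) := by
  let e : ℝ → ℂ := fun x => Complex.exp (-(n * (π / L) * x) * Complex.I)
  have norm_e : ∀ x, ‖e x‖ = 1 := fun x => by
    simpa [e] using Complex.norm_exp_ofReal_mul_I (-(n * (π / L) * x))
  have integrable_mul : ∀ g : ℝ → ℝ, Continuous g →
      Integrable fun x => (f x : ℂ) * e (g x) := fun g hg =>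
    hint.ofReal.mul_bdd (c := 1) (Continuous.aestronglyMeasurable (by fun_prop))
      (ae_of_all _ fun x => (norm_e (g x)).le)
  have hout : ∀ x, x ∉ Set.Ioc (-L) L → (oddExtension f x : ℂ) * e x = 0 := fun x hx => by
    rw [oddExtension_eq_zero_of_notMem_Ioc hf hx, Complex.ofReal_zero, zero_mul]
  calc fourierCoeffOn (neg_lt_self hL) (fun x => (oddExtension f x : ℂ)) n
      = 1 / (2 * L) * ∫ x in Set.Ioc (-L) L, (oddExtension f x : ℂ) * e x := by
        rw [fourierCoeffOn_eq_integral, intervalIntegral.integral_of_le (neg_lt_self hL).le]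
        simp only [fourier_neg_apply_symmetric_period hL.ne', smul_eq_mul, Complex.real_smul, e,
          mul_comm (Complex.exp _)]
        push_cast
        ring
    _ = 1 / (2 * L) * ∫ x, (f x : ℂ) * (e x - e (-x)) := by
        rw [setIntegral_eq_integral_of_forall_compl_eq_zero hout,
          integral_oddExtension_mul (e := e) (integrable_mul id continuous_id)
            (integrable_mul _ continuous_neg)]
    _ = 1 / (2 * L) * ∫ x, -(2 * Complex.I) * ((f x * sin (n * (π / L) * x) : ℝ) : ℂ) := by
        congr! 3 with x
        simp only [e]
        push_cast
        rw [Complex.sin, mul_neg, neg_neg]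
        linear_combination f x * (Complex.exp (-(n * (π / L) * x) * Complex.I)
          - Complex.exp (n * (π / L) * x * Complex.I)) * Complex.I_sq
    _ = -(Complex.I / L) * (∫ x, f x * sin (n * (π / L) * x) : ℝ) := by
        rw [integral_const_mul, integral_complex_ofReal]
        field_simp

theorem intervalIntegral_sq_oddExtension (hL : 0 ≤ L) (hf : MemLp f 2)
    (hsupp : Function.support f ⊆ Set.Ioo 0 L) :
    ∫ x in (-L)..L, oddExtension f x ^ 2 = 2 * ∫ x, f x ^ 2 := by
  rw [intervalIntegral.integral_of_le (neg_le_self hL),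
    setIntegral_eq_integral_of_forall_compl_eq_zero fun x hx => by
      rw [oddExtension_eq_zero_of_notMem_Ioc hsupp hx, sq, mul_zero],
    integral_sq_oddExtension hf (mul_comp_neg_eq_zero fun x hx => (hsupp hx).1)]

end OddExtension

theorem hasSum_two_mul_nat_succ_of_even {a : ℤ → ℝ} {A : ℝ} (h : HasSum a A)
    (heven : ∀ n, a (-n) = a n) (h0 : a 0 = 0) : HasSum (fun n : ℕ => 2 * a (n + 1)) A := by
  have key : HasSum (fun n : ℕ => 2 * a n) A := by
    simpa only [heven, ← two_mul, h0, add_zero] using h.nat_add_neg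
  simpa [h0] using (hasSum_nat_add_iff' 1).2 key

theorem hasSum_sq_integral_mul_sin {L : ℝ} (hL : 0 < L) {f : ℝ → ℝ} (hf : MemLp f 2)
    (hsupp : Function.support f ⊆ Set.Ioo 0 L) :
    HasSum (fun n : ℕ => 2 / L * (∫ x, f x * sin ((n + 1) * (π / L) * x)) ^ 2)
      (∫ x, f x ^ 2) := by
  have hint : Integrable f := by
    rw [← integrableOn_iff_integrable_of_support_subset hsupp]
    exact (hf.restrict _).integrable one_le_two
  have hF : MemLp (fun x => (oddExtension f x : ℂ)) 2 (volume.restrict (Set.Ioc (-L) L)) :=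
    ((memLp_oddExtension hf).restrict _).ofReal
  have norm_sq : (L - -L)⁻¹ • ∫ x in (-L)..L, ‖(oddExtension f x : ℂ)‖ ^ 2
      = 1 / L * ∫ x, f x ^ 2 := by
    simp only [Complex.norm_real, Real.norm_eq_abs, sq_abs, smul_eq_mul]
    rw [intervalIntegral_sq_oddExtension hL.le hf hsupp]
    field_simp
    ring
  let S : ℤ → ℝ := fun n => ∫ x, f x * sin (n * (π / L) * x)
  have norm_coeff : ∀ n, ‖fourierCoeffOn (neg_lt_self hL) (fun x => (oddExtension f x : ℂ)) n‖ ^ 2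
      = 1 / L ^ 2 * S n ^ 2 := fun n => by
    rw [fourierCoeffOn_oddExtension hL hint hsupp, norm_mul, norm_neg, norm_div, Complex.norm_I,
      Complex.norm_real, Complex.norm_real, Real.norm_eq_abs, Real.norm_eq_abs, mul_pow, div_pow,
      sq_abs, sq_abs, one_pow]
  have S_neg : ∀ n, S (-n) = -S n := fun n => by
    simp only [S, ← integral_neg, Int.cast_neg, neg_mul, sin_neg, mul_neg]
  have parseval : HasSum (fun n => 1 / L ^ 2 * S n ^ 2) (1 / L * ∫ x, f x ^ 2) := by
    simpa only [norm_coeff, norm_sq] using hasSum_sq_fourierCoeffOn (neg_lt_self hL) hF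
  have term_eq : ∀ n : ℕ, L * (2 * (1 / L ^ 2 * S (n + 1) ^ 2))
      = 2 / L * (∫ x, f x * sin ((n + 1) * (π / L) * x)) ^ 2 := fun n => by
    simp only [S, Int.cast_add, Int.cast_natCast, Int.cast_one]
    generalize ∫ x, f x * sin ((n + 1) * (π / L) * x) = t
    field_simp
  have sum_eq : L * (1 / L * ∫ x, f x ^ 2) = ∫ x, f x ^ 2 := by
    rw [← mul_assoc, mul_one_div_cancel hL.ne', one_mul]
  simpa only [term_eq, sum_eq] using (hasSum_two_mul_nat_succ_of_even parseval
    (fun n => by rw [S_neg, neg_sq]) (by simp [S])).mul_left L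

theorem isParsevalFrame_sineMode {L : ℝ} (hL : 0 < L) :
    IsParsevalFrame (volume.restrict (Set.Ioo 0 L)) (sineMode L) where
  memLp n := by
    refine MemLp.of_bound (Continuous.aestronglyMeasurable (by unfold sineMode; fun_prop))
      √(2 / L) (ae_of_all _ fun x => ?_)
    rw [sineMode, norm_mul, Real.norm_of_nonneg (Real.sqrt_nonneg _)]
    exact mul_le_of_le_one_right (Real.sqrt_nonneg _) (abs_sin_le_one _)
  hasSum {f} hf := by
    have coeff_eq : ∀ n, (∫ x in Set.Ioo 0 L, f x * sineMode L n x) ^ 2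
        = 2 / L * (∫ x, (Set.Ioo 0 L).indicator f x * sin ((n + 1) * (π / L) * x)) ^ 2 := by
      intro n
      simp only [sineMode, mul_left_comm (f _), integral_const_mul, mul_pow,
        Real.sq_sqrt (div_pos two_pos hL).le]
      rw [← integral_indicator measurableSet_Ioo]
      simp only [Set.indicator_mul_left]
    have norm_eq : ∫ x in Set.Ioo 0 L, f x ^ 2 = ∫ x, (Set.Ioo 0 L).indicator f x ^ 2 := by
      rw [← integral_indicator measurableSet_Ioo]
      simp only [sq, Set.indicator_mul]
    simpa only [coeff_eq, norm_eq] using hasSum_sq_integral_mul_sin hL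
      ((memLp_indicator_iff_restrict measurableSet_Ioo).2 hf) Set.support_indicator_subset

/-! ### The Laplacian and the modes of a rectangle -/

section PartialDerivatives

variable {u w φ : ℝ × ℝ → ℝ}

theorem contDiff_pd {m n : WithTop ℕ∞} (hu : ContDiff ℝ n u) (hmn : m + 1 ≤ n) (v : ℝ × ℝ) :
    ContDiff ℝ m (pd v u) :=
  (hu.fderiv_right hmn).clm_apply contDiff_const

theorem hasCompactSupport_pd (hu : HasCompactSupport u) (v : ℝ × ℝ) :
    HasCompactSupport (pd v u) :=
  hu.fderiv_apply ℝ v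

theorem tsupport_pd_subset (u : ℝ × ℝ → ℝ) (v : ℝ × ℝ) : tsupport (pd v u) ⊆ tsupport u :=
  tsupport_fderiv_apply_subset ℝ v

theorem pd_sum_mul {ι : Type*} [Fintype ι] (c : ι → ℝ) {u : ι → ℝ × ℝ → ℝ}
    (hu : ∀ i, Differentiable ℝ (u i)) (v : ℝ × ℝ) :
    pd v (fun q => ∑ i, c i * u i q) = fun q => ∑ i, c i * pd v (u i) q := by
  funext q
  simp only [pd, fderiv_fun_sum fun i _ => (hu i q).const_mul (c i), sum_apply,
    fderiv_const_mul (hu _ q), smul_apply, smul_eq_mul]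

theorem lap_sum_mul {ι : Type*} [Fintype ι] (c : ι → ℝ) {u : ι → ℝ × ℝ → ℝ}
    (hu : ∀ i, ContDiff ℝ 2 (u i)) :
    lap (fun q => ∑ i, c i * u i q) = fun q => ∑ i, c i * lap (u i) q := by
  have hpd : ∀ v i, Differentiable ℝ (pd v (u i)) := fun v i =>
    (contDiff_pd (hu i) one_add_one_eq_two.le v).differentiable one_ne_zero
  funext q
  simp only [lap, uxx, uyy, pd_sum_mul c fun i => (hu i).differentiable two_ne_zero,
    pd_sum_mul c (hpd _), mul_add, Finset.sum_add_distrib]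

theorem contDiff_lap {m n : WithTop ℕ∞} (hu : ContDiff ℝ n u) (hmn : m + 1 + 1 ≤ n) :
    ContDiff ℝ m (lap u) :=
  (contDiff_pd (contDiff_pd hu hmn _) le_rfl _).add (contDiff_pd (contDiff_pd hu hmn _) le_rfl _)

theorem lap_eq_zero_of_notMem_tsupport {q : ℝ × ℝ} (hq : q ∉ tsupport u) : lap u q = 0 := by
  have hpd : ∀ v, pd v (pd v u) q = 0 := fun v => image_eq_zero_of_notMem_tsupport fun h =>
    hq (tsupport_pd_subset _ v (tsupport_pd_subset _ v h))
  rw [lap, uxx, uyy, hpd, hpd, add_zero]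

theorem integral_pd_mul (hw : ContDiff ℝ 1 w) (hc : HasCompactSupport w) (hφ : ContDiff ℝ 1 φ)
    (v : ℝ × ℝ) : ∫ q, pd v w q * φ q = -∫ q, w q * pd v φ q := by
  have hw' : Continuous (pd v w) := (contDiff_pd (m := 0) hw (zero_add _).le v).continuous
  have hφ' : Continuous (pd v φ) := (contDiff_pd (m := 0) hφ (zero_add _).le v).continuous
  rw [eq_neg_iff_add_eq_zero, add_comm, ← eq_neg_iff_add_eq_zero]
  exact integral_mul_fderiv_eq_neg_fderiv_mul_of_integrable
    ((hw'.mul hφ.continuous).integrable_of_hasCompactSupport (hasCompactSupport_pd hc v).mul_right)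
    ((hw.continuous.mul hφ').integrable_of_hasCompactSupport hc.mul_right)
    ((hw.continuous.mul hφ.continuous).integrable_of_hasCompactSupport hc.mul_right)
    (fun x _ => hw.differentiable one_ne_zero x) (fun x _ => hφ.differentiable one_ne_zero x)

theorem integral_lap_mul (hw : ContDiff ℝ 2 w) (hc : HasCompactSupport w) (hφ : ContDiff ℝ 2 φ) :
    ∫ q, lap w q * φ q = ∫ q, w q * lap φ q := by
  have contDiff_one {f : ℝ × ℝ → ℝ} (hf : ContDiff ℝ 2 f) (v) : ContDiff ℝ 1 (pd v f) :=
    contDiff_pd hf one_add_one_eq_two.le v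
  have continuous_pd_pd {f : ℝ × ℝ → ℝ} (hf : ContDiff ℝ 2 f) (v) : Continuous (pd v (pd v f)) :=
    (contDiff_pd (m := 0) (contDiff_one hf v) (zero_add _).le v).continuous
  have parts : ∀ v, ∫ q, pd v (pd v w) q * φ q = ∫ q, w q * pd v (pd v φ) q := fun v => by
    rw [integral_pd_mul (contDiff_one hw v) (hasCompactSupport_pd hc v)
        (hφ.of_le one_le_two),
      integral_pd_mul (hw.of_le one_le_two) hc (contDiff_one hφ v), neg_neg]
  have hi : ∀ v, Integrable fun q => pd v (pd v w) q * φ q := fun v =>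
    ((continuous_pd_pd hw v).mul hφ.continuous).integrable_of_hasCompactSupport
      (hasCompactSupport_pd (hasCompactSupport_pd hc v) v).mul_right
  have hi' : ∀ v, Integrable fun q => w q * pd v (pd v φ) q := fun v =>
    (hw.continuous.mul (continuous_pd_pd hφ v)).integrable_of_hasCompactSupport hc.mul_right
  simp only [lap, uxx, uyy, add_mul, mul_add]
  rw [integral_add (hi _) (hi _), integral_add (hi' _) (hi' _), parts, parts]

theorem pd_separated {f g : ℝ → ℝ} (hf : Differentiable ℝ f) (hg : Differentiable ℝ g)
    (v : ℝ × ℝ) : pd v (fun q => f q.1 * g q.2)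
      = fun q => v.1 * (deriv f q.1 * g q.2) + v.2 * (f q.1 * deriv g q.2) := by
  funext q
  have hf' : HasFDerivAt (fun q : ℝ × ℝ => f q.1) _ q :=
    (hf q.1).hasDerivAt.hasFDerivAt.comp q hasFDerivAt_fst
  have hg' : HasFDerivAt (fun q : ℝ × ℝ => g q.2) _ q :=
    (hg q.2).hasDerivAt.hasFDerivAt.comp q hasFDerivAt_snd
  rw [pd, (hf'.fun_mul hg').fderiv]
  simp only [add_apply, smul_apply, ContinuousLinearMap.comp_apply,
    ContinuousLinearMap.coe_fst', ContinuousLinearMap.coe_snd',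
    ContinuousLinearMap.toSpanSingleton_apply, smul_eq_mul]
  ring

theorem lap_separated {f g : ℝ → ℝ} (hf : ContDiff ℝ 2 f) (hg : ContDiff ℝ 2 g) :
    lap (fun q => f q.1 * g q.2)
      = fun q => deriv (deriv f) q.1 * g q.2 + f q.1 * deriv (deriv g) q.2 := by
  have hf1 := hf.differentiable two_ne_zero
  have hg1 := hg.differentiable two_ne_zero
  have hf2 := hf.differentiable_deriv_two
  have hg2 := hg.differentiable_deriv_two
  funext q
  simp only [lap, uxx, uyy, pd_separated hf1 hg1, one_mul, zero_mul, add_zero, zero_add,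
    pd_separated hf2 hg1, pd_separated hf1 hg2]

end PartialDerivatives

theorem contDiff_sineMode {m : WithTop ℕ∞} (L : ℝ) (n : ℕ) : ContDiff ℝ m (sineMode L n) := by
  unfold sineMode
  fun_prop

theorem deriv_deriv_sineMode (L : ℝ) (n : ℕ) :
    deriv (deriv (sineMode L n)) = fun x => -((n + 1) * (π / L)) ^ 2 * sineMode L n x := by
  let ω : ℝ := (n + 1) * (π / L)
  have hω : ∀ x, HasDerivAt (fun x => ω * x) ω x := fun _ => hasDerivAt_const_mul ω
  have deriv_eq : deriv (sineMode L n) = fun x => √(2 / L) * (cos (ω * x) * ω) :=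
    funext fun x => ((hω x).sin.const_mul √(2 / L)).deriv
  rw [deriv_eq]
  funext x
  rw [(((hω x).cos.mul_const ω).const_mul √(2 / L)).deriv, sineMode]
  ring

/-- Normalised Dirichlet eigenfunctions of the rectangle `(0, L) × (0, M)`, with indices counted
from `0`. -/
def rectMode (L M : ℝ) (p : ℕ × ℕ) (q : ℝ × ℝ) : ℝ := sineMode L p.1 q.1 * sineMode M p.2 q.2

/-- The Dirichlet eigenvalue of `-Δ` on the rectangle `(0, L) × (0, M)` belonging to
`rectMode L M p`. -/
def rectEigenvalue (L M : ℝ) (p : ℕ × ℕ) : ℝ :=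
  ((p.1 + 1) * (π / L)) ^ 2 + ((p.2 + 1) * (π / M)) ^ 2

theorem contDiff_rectMode {m : WithTop ℕ∞} (L M : ℝ) (p : ℕ × ℕ) :
    ContDiff ℝ m (rectMode L M p) :=
  ((contDiff_sineMode L p.1).comp contDiff_fst).mul ((contDiff_sineMode M p.2).comp contDiff_snd)

theorem lap_rectMode (L M : ℝ) (p : ℕ × ℕ) :
    lap (rectMode L M p) = fun q => -(rectEigenvalue L M p * rectMode L M p q) := by
  unfold rectMode
  rw [lap_separated (contDiff_sineMode L p.1) (contDiff_sineMode M p.2), deriv_deriv_sineMode,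
    deriv_deriv_sineMode]
  funext q
  simp only [rectEigenvalue]
  ring

theorem isParsevalFrame_rectMode {L M : ℝ} (hL : 0 < L) (hM : 0 < M) :
    IsParsevalFrame (volume.restrict (Set.Ioo 0 L ×ˢ Set.Ioo 0 M)) (rectMode L M) := by
  rw [Measure.volume_eq_prod, ← Measure.prod_restrict]
  exact (isParsevalFrame_sineMode hL).prod (isParsevalFrame_sineMode hM)

/-! ### Counting modes -/

theorem trapezoid_le_integral_of_concaveOn {f : ℝ → ℝ} {p q : ℝ} (hpq : p ≤ q)
    (hf : ConcaveOn ℝ (Set.Icc p q) f) (hint : IntervalIntegrable f volume p q) :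
    (q - p) * (f p + f q) / 2 ≤ ∫ x in p..q, f x := by
  rcases hpq.eq_or_lt with rfl | hlt
  · simp
  have hne : q - p ≠ 0 := (sub_pos.2 hlt).ne'
  let chord : ℝ → ℝ := fun x => f p + (x - p) * ((f q - f p) / (q - p))
  have chord_le : ∀ x ∈ Set.Icc p q, chord x ≤ f x := fun x hx => by
    have convex_comb : (q - x) / (q - p) * p + (x - p) / (q - p) * q = x := by
      field_simp
      ring
    calc chord x = (q - x) / (q - p) * f p + (x - p) / (q - p) * f q := by
          simp only [chord]
          field_simp
          ring
      _ ≤ f ((q - x) / (q - p) * p + (x - p) / (q - p) * q) :=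
          hf.2 (Set.left_mem_Icc.2 hpq) (Set.right_mem_Icc.2 hpq)
            (div_nonneg (sub_nonneg.2 hx.2) (sub_nonneg.2 hpq))
            (div_nonneg (sub_nonneg.2 hx.1) (sub_nonneg.2 hpq)) (by field_simp; ring)
      _ = f x := by rw [convex_comb]
  calc (q - p) * (f p + f q) / 2 = ∫ x in p..q, chord x := by
        simp only [chord]
        rw [intervalIntegral.integral_add (Continuous.intervalIntegrable (by fun_prop) _ _)
          (Continuous.intervalIntegrable (by fun_prop) _ _), intervalIntegral.integral_mul_const,
          intervalIntegral.integral_comp_sub_right (fun x => x)]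
        simp only [intervalIntegral.integral_const, integral_id, smul_eq_mul]
        field_simp
        ring
    _ ≤ ∫ x in p..q, f x := intervalIntegral.integral_mono_on hpq
        (Continuous.intervalIntegrable (by fun_prop) _ _) hint chord_le

theorem sum_range_succ_le_integral_of_concaveOn {f : ℝ → ℝ} {N : ℕ}
    (hf : ConcaveOn ℝ (Set.Icc (0 : ℝ) N) f) (hint : IntervalIntegrable f volume 0 N) :
    ∑ n ∈ Finset.range N, f (n + 1) ≤ (∫ x in 0..N, f x) + (f N - f 0) / 2 := by
  have cell_subset : ∀ n < N, Set.Icc (n : ℝ) ((n + 1 : ℕ) : ℝ) ⊆ Set.Icc (0 : ℝ) N := fun n hn =>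
    Set.Icc_subset_Icc n.cast_nonneg (Nat.cast_le.2 hn)
  have cell_int : ∀ n < N, IntervalIntegrable f volume n (n + 1 : ℕ) := fun n hn =>
    hint.mono_set (by
      simpa only [Set.uIcc_of_le, Nat.cast_le, n.le_succ, N.cast_nonneg] using cell_subset n hn)
  have cell_le : ∀ n ∈ Finset.range N,
      f (n + 1) ≤ (∫ x in (n : ℝ)..(n + 1 : ℕ), f x) + (f (n + 1 : ℕ) - f n) / 2 := by
    intro n hn
    have h := trapezoid_le_integral_of_concaveOn (Nat.cast_le.2 n.le_succ)
      (hf.subset (cell_subset n (Finset.mem_range.1 hn)) (convex_Icc _ _))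
      (cell_int n (Finset.mem_range.1 hn))
    push_cast at h ⊢
    linarith
  refine (Finset.sum_le_sum cell_le).trans_eq ?_
  rw [Finset.sum_add_distrib, ← Finset.sum_div, Finset.sum_range_sub (fun n : ℕ => f n),
    intervalIntegral.sum_integral_adjacent_intervals cell_int, Nat.cast_zero]

theorem concaveOn_sqrt_sq_sub_sq (R : ℝ) :
    ConcaveOn ℝ (Set.Icc 0 R) fun x => √(R ^ 2 - x ^ 2) := by
  have hconc : ConcaveOn ℝ (Set.Icc 0 R) fun x => R ^ 2 - x ^ 2 :=
    (concaveOn_const _ (convex_Icc _ _)).sub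
      ((convexOn_pow 2).subset Set.Icc_subset_Ici_self (convex_Icc _ _))
  have himage : (fun x => R ^ 2 - x ^ 2) '' Set.Icc 0 R ⊆ Set.Ici 0 := by
    rintro _ ⟨x, hx, rfl⟩
    exact sub_nonneg.2 (pow_le_pow_left₀ hx.1 hx.2 2)
  have hconv : Convex ℝ ((fun x => R ^ 2 - x ^ 2) '' Set.Icc 0 R) :=
    Real.convex_iff_isPreconnected.2 (isPreconnected_Icc.image _ (by fun_prop))
  exact (strictConcaveOn_sqrt.concaveOn.subset himage hconv).comp hconc
    fun _ _ _ _ h => Real.sqrt_le_sqrt h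

theorem integral_sqrt_sq_sub_sq {R : ℝ} (hR : 0 ≤ R) :
    ∫ x in 0..R, √(R ^ 2 - x ^ 2) = π * R ^ 2 / 4 := by
  have unit : ∫ x in (0 : ℝ)..1, √(1 - x ^ 2) = π / 4 := by
    have hint : ∀ c d : ℝ, IntervalIntegrable (fun x : ℝ => √(1 - x ^ 2)) volume c d :=
      fun c d => Continuous.intervalIntegrable (by fun_prop) _ _
    have hsymm : ∫ x in (-1 : ℝ)..0, √(1 - x ^ 2) = ∫ x in (0 : ℝ)..1, √(1 - x ^ 2) := by
      have hneg := intervalIntegral.integral_comp_neg (a := -1) (b := 0) fun x : ℝ => √(1 - x ^ 2)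
      simpa only [neg_sq, neg_neg, neg_zero] using hneg
    have hfull := integral_sqrt_one_sub_sq
    rw [← intervalIntegral.integral_add_adjacent_intervals (hint (-1) 0) (hint 0 1), hsymm] at hfull
    linarith
  have scale : ∀ x : ℝ, √(R ^ 2 - (R * x) ^ 2) = R * √(1 - x ^ 2) := fun x => by
    rw [mul_pow, ← mul_one_sub, Real.sqrt_mul (sq_nonneg R), Real.sqrt_sq hR]
  calc ∫ x in 0..R, √(R ^ 2 - x ^ 2) = R * ∫ x in (0 : ℝ)..1, √(R ^ 2 - (R * x) ^ 2) := by
        rw [intervalIntegral.mul_integral_comp_mul_left (f := fun x => √(R ^ 2 - x ^ 2)),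
          mul_zero, mul_one]
    _ = π * R ^ 2 / 4 := by
        simp only [scale, intervalIntegral.integral_const_mul, unit]
        ring

theorem one_sub_mul_sqrt_le {t : ℝ} (ht : 0 ≤ t) : (1 - t) * √t ≤ 2 / (3 * √3) := by
  obtain ⟨z, hz, rfl⟩ : ∃ z, 0 ≤ z ∧ t = z ^ 2 := ⟨√t, Real.sqrt_nonneg t, (Real.sq_sqrt ht).symm⟩
  have h3 : √3 ^ 2 = 3 := Real.sq_sqrt zero_le_three
  rw [Real.sqrt_sq hz, le_div_iff₀ (by positivity)]
  -- The difference of the two sides has a double zero at the maximiser `z = 1 / √3`.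
  have factored : 2 - (1 - z ^ 2) * z * (3 * √3) = (√3 * z + 2) * (√3 * z - 1) ^ 2 := by
    linear_combination -√3 * z ^ 3 * h3
  have : 0 ≤ (√3 * z + 2) * (√3 * z - 1) ^ 2 := by positivity
  linarith

theorem one_sub_sub_mul_sqrt_sq_sub_sq_le {N R : ℝ} (hNR : N ≤ R) (hRN : R ≤ N + 1) :
    (1 - (R - N)) * √(R ^ 2 - N ^ 2) ≤ 2 * (√2 / (3 * √3) * √R) := by
  have sqrt_le : √(R ^ 2 - N ^ 2) ≤ √(R - N) * (√2 * √R) := by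
    rw [← Real.sqrt_mul zero_le_two, ← Real.sqrt_mul (sub_nonneg.2 hNR)]
    exact Real.sqrt_le_sqrt (by nlinarith)
  calc (1 - (R - N)) * √(R ^ 2 - N ^ 2) ≤ (1 - (R - N)) * (√(R - N) * (√2 * √R)) :=
        mul_le_mul_of_nonneg_left sqrt_le (by linarith)
    _ = (1 - (R - N)) * √(R - N) * (√2 * √R) := by ring
    _ ≤ 2 / (3 * √3) * (√2 * √R) :=
        mul_le_mul_of_nonneg_right (one_sub_mul_sqrt_le (sub_nonneg.2 hNR)) (by positivity)
    _ = 2 * (√2 / (3 * √3) * √R) := by ring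

theorem sum_sqrt_sq_sub_sq_le {R : ℝ} (hR : 0 ≤ R) :
    ∑ n ∈ Finset.range ⌊R⌋₊, √(R ^ 2 - (n + 1) ^ 2)
      ≤ π * R ^ 2 / 4 - R / 2 + √2 / (3 * √3) * √R := by
  let N := ⌊R⌋₊
  have hN : (N : ℝ) ≤ R := Nat.floor_le hR
  have hint : ∀ c d, IntervalIntegrable (fun x => √(R ^ 2 - x ^ 2)) volume c d := fun c d =>
    Continuous.intervalIntegrable (by fun_prop) c d
  have hconc := concaveOn_sqrt_sq_sub_sq R
  have head := sum_range_succ_le_integral_of_concaveOn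
    (hconc.subset (Set.Icc_subset_Icc_right hN) (convex_Icc _ _)) (hint 0 N)
  have tail := trapezoid_le_integral_of_concaveOn hN
    (hconc.subset (Set.Icc_subset_Icc_left N.cast_nonneg) (convex_Icc _ _)) (hint N R)
  have last_chord := one_sub_sub_mul_sqrt_sq_sub_sq_le hN (Nat.lt_floor_add_one R).le
  have total := intervalIntegral.integral_add_adjacent_intervals (hint 0 N) (hint N R)
  rw [integral_sqrt_sq_sub_sq hR] at total
  simp only [zero_pow two_ne_zero, sub_zero, Real.sqrt_sq hR, sub_self, Real.sqrt_zero,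
    add_zero] at head tail
  linarith

/-- The indices of the modes whose Laplace eigenvalue is at most `s`. -/
def lowModes (L M s : ℝ) : Set (ℕ × ℕ) := {p | rectEigenvalue L M p ≤ s}

theorem exists_nonneg_eq_sq {c s : ℝ} (hc : 0 < c) (hs : 0 ≤ s) :
    ∃ R, 0 ≤ R ∧ s = (c * R) ^ 2 :=
  ⟨√s / c, by positivity, by rw [mul_div_cancel₀ _ hc.ne', Real.sq_sqrt hs]⟩

section LowModes

variable {L M R : ℝ}

theorem lowModes_subset (hL : 0 < L) (hM : 0 < M) (hR : 0 ≤ R) :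
    lowModes L M ((π / M * R) ^ 2) ⊆ ((Finset.range ⌊R⌋₊).biUnion fun n =>
      Finset.range ⌊L / M * √(R ^ 2 - (n + 1) ^ 2)⌋₊ ×ˢ {n} : Finset (ℕ × ℕ)) := by
  rintro ⟨m, n⟩ hp
  have ellipse : (m + 1 : ℝ) ^ 2 ≤ (L / M) ^ 2 * (R ^ 2 - (n + 1) ^ 2) := by
    have h : ((m + 1) * (π / L)) ^ 2 + ((n + 1) * (π / M)) ^ 2 ≤ (π / M * R) ^ 2 := hp
    have hscale := mul_le_mul_of_nonneg_left h (sq_nonneg (L / π))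
    field_simp at hscale ⊢
    linarith
  have hchord : 0 ≤ R ^ 2 - (n + 1) ^ 2 :=
    (pos_of_mul_pos_right ((by positivity : (0 : ℝ) < (m + 1) ^ 2).trans_le ellipse)
      (sq_nonneg _)).le
  have hn : n < ⌊R⌋₊ := Nat.le_floor <| by
    push_cast
    exact le_of_sq_le_sq (sub_nonneg.1 hchord) hR
  have hm : m < ⌊L / M * √(R ^ 2 - (n + 1) ^ 2)⌋₊ := Nat.le_floor <| by
    push_cast
    refine le_of_sq_le_sq ?_ (by positivity)
    rwa [mul_pow, Real.sq_sqrt hchord]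
  simp only [Finset.coe_biUnion, Set.mem_iUnion, Finset.mem_coe, Finset.mem_product,
    Finset.mem_range, Finset.mem_singleton]
  exact ⟨n, hn, hm, rfl⟩

theorem ncard_lowModes_sq_le (hL : 0 < L) (hM : 0 < M) (hR : 0 ≤ R) :
    ((lowModes L M ((π / M * R) ^ 2)).ncard : ℝ)
      ≤ L / M * (π * R ^ 2 / 4 - R / 2 + √2 / (3 * √3) * √R) := by
  have hLM : 0 ≤ L / M := (div_pos hL hM).le
  have card_le : (lowModes L M ((π / M * R) ^ 2)).ncard
      ≤ ∑ n ∈ Finset.range ⌊R⌋₊, ⌊L / M * √(R ^ 2 - (n + 1) ^ 2)⌋₊ := by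
    refine (Set.ncard_le_ncard (lowModes_subset hL hM hR) (Finset.finite_toSet _)).trans ?_
    rw [Set.ncard_coe_finset]
    refine Finset.card_biUnion_le.trans (Finset.sum_le_sum fun n _ => ?_)
    rw [Finset.card_product, Finset.card_range, Finset.card_singleton, mul_one]
  calc ((lowModes L M ((π / M * R) ^ 2)).ncard : ℝ)
      ≤ ∑ n ∈ Finset.range ⌊R⌋₊, (⌊L / M * √(R ^ 2 - (n + 1) ^ 2)⌋₊ : ℝ) := mod_cast card_le
    _ ≤ ∑ n ∈ Finset.range ⌊R⌋₊, L / M * √(R ^ 2 - (n + 1) ^ 2) :=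
        Finset.sum_le_sum fun n _ => Nat.floor_le (mul_nonneg hLM (Real.sqrt_nonneg _))
    _ ≤ L / M * (π * R ^ 2 / 4 - R / 2 + √2 / (3 * √3) * √R) := by
        rw [← Finset.mul_sum]
        exact mul_le_mul_of_nonneg_left (sum_sqrt_sq_sub_sq_le hR) hLM

theorem finite_lowModes (hL : 0 < L) (hM : 0 < M) (s : ℝ) : (lowModes L M s).Finite := by
  obtain ⟨R, hR, hs⟩ := exists_nonneg_eq_sq (div_pos pi_pos hM) (abs_nonneg s)
  exact (Finset.finite_toSet _).subset fun p (hp : rectEigenvalue L M p ≤ s) =>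
    lowModes_subset hL hM hR (hp.trans (hs ▸ le_abs_self s))

theorem four_pi_mul_ncard_lowModes_le (hL : 0 < L) (hM : 0 < M) {s : ℝ} (hs : 0 ≤ s) :
    4 * π * (lowModes L M s).ncard / (L * M)
      ≤ s - 2 * (1 / M) * √s
        + 4 * √(2 * π) / (3 * √3) * (1 / M) ^ ((3 : ℝ) / 2) * √√s := by
  obtain ⟨R, hR, rfl⟩ := exists_nonneg_eq_sq (div_pos pi_pos hM) hs
  have rpow_eq : (1 / M) ^ ((3 : ℝ) / 2) = 1 / M * (1 / √M) := by
    rw [show (3 : ℝ) / 2 = 1 + 1 / 2 by norm_num, Real.rpow_add (by positivity), Real.rpow_one,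
      ← Real.sqrt_eq_rpow, Real.sqrt_div zero_le_one, Real.sqrt_one]
  have hπ : √π ^ 2 = π := Real.sq_sqrt pi_pos.le
  have hMM : √M ^ 2 = M := Real.sq_sqrt hM.le
  have : 0 < √M := Real.sqrt_pos.2 hM
  calc 4 * π * (lowModes L M ((π / M * R) ^ 2)).ncard / (L * M)
      = 4 * π / (L * M) * (lowModes L M ((π / M * R) ^ 2)).ncard := by ring
    _ ≤ 4 * π / (L * M) * (L / M * (π * R ^ 2 / 4 - R / 2 + √2 / (3 * √3) * √R)) :=
        mul_le_mul_of_nonneg_left (ncard_lowModes_sq_le hL hM hR) (by positivity)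
    _ = (π / M * R) ^ 2 - 2 * (1 / M) * (π / M * R)
        + 4 * (√2 * √π) / (3 * √3) * (1 / M * (1 / √M)) * (√π / √M * √R) := by
        field_simp
        rw [hπ, hMM]
        ring
    _ = (π / M * R) ^ 2 - 2 * (1 / M) * √((π / M * R) ^ 2)
        + 4 * √(2 * π) / (3 * √3) * (1 / M) ^ ((3 : ℝ) / 2) * √√((π / M * R) ^ 2) := by
        rw [Real.sqrt_sq (by positivity), Real.sqrt_mul (div_pos pi_pos hM).le,
          Real.sqrt_div pi_pos.le, Real.sqrt_mul zero_le_two, rpow_eq]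

end LowModes

/-! ### Test functions and Rayleigh quotients -/

section Admissible

variable {Ω : Set (ℝ × ℝ)} {w : ℝ × ℝ → ℝ}

theorem Adm.eq_zero_of_notMem (hw : Adm Ω w) {q : ℝ × ℝ} (hq : q ∉ Ω) : w q = 0 :=
  image_eq_zero_of_notMem_tsupport fun h => hq (hw.2.2 h)

theorem Adm.memLp (hw : Adm Ω w) : MemLp w 2 :=
  hw.1.continuous.memLp_of_hasCompactSupport hw.2.1

theorem adm_lap (hw : Adm Ω w) : Adm Ω (lap w) := by
  have tsupport_lap_subset : tsupport (lap w) ⊆ tsupport w :=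
    closure_minimal (fun _ hq => not_imp_comm.1 lap_eq_zero_of_notMem_tsupport hq)
      (isClosed_tsupport w)
  exact ⟨contDiff_lap hw.1 le_rfl, hw.2.1.of_isClosed_subset (isClosed_tsupport _)
    tsupport_lap_subset, tsupport_lap_subset.trans hw.2.2⟩

theorem Adm.sum_mul {ι : Type*} [Fintype ι] (c : ι → ℝ) {u : ι → ℝ × ℝ → ℝ}
    (hu : ∀ i, Adm Ω (u i)) : Adm Ω fun q => ∑ i, c i * u i q := by
  have hsub : tsupport (fun q => ∑ i, c i * u i q) ⊆ ⋃ i, tsupport (u i) := by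
    refine closure_minimal (fun q hq => ?_) (isClosed_iUnion_of_finite fun i => isClosed_tsupport _)
    obtain ⟨i, -, hi⟩ := Finset.exists_ne_zero_of_sum_ne_zero hq
    exact Set.mem_iUnion.2 ⟨i, subset_tsupport _ (right_ne_zero_of_mul hi)⟩
  exact ⟨ContDiff.sum fun i _ => contDiff_const.mul (hu i).1,
    (isCompact_iUnion fun i => (hu i).2.1).of_isClosed_subset (isClosed_tsupport _) hsub,
    hsub.trans (Set.iUnion_subset fun i => (hu i).2.2)⟩

theorem Adm.integral_sq_pos (hw : Adm Ω w) (h0 : w ≠ 0) : 0 < ∫ q, w q ^ 2 := by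
  obtain ⟨q, hq⟩ := Function.ne_iff.1 h0
  refine (hw.1.continuous.pow 2).integral_pos_of_hasCompactSupport_nonneg_nonzero (x := q)
    ?_ (fun _ => sq_nonneg _) (pow_ne_zero 2 hq)
  simp only [sq]
  exact hw.2.1.mul_right

theorem exists_linearIndependent_adm (hΩ : IsOpen Ω) (hne : Ω.Nonempty) (k : ℕ) :
    ∃ u : Fin k → ℝ × ℝ → ℝ, (∀ i, Adm Ω (u i)) ∧ LinearIndependent ℝ u := by
  obtain ⟨z, hz⟩ := hne
  let y : ℕ ↪ Ω := (infinite_of_mem_nhds z (hΩ.mem_nhds hz)).natEmbedding Ω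
  let x : Fin k → ℝ × ℝ := fun i => y i
  have hx : Function.Injective x :=
    Subtype.val_injective.comp (y.injective.comp Fin.val_injective)
  have bump : ∀ i, ∃ f, Adm Ω f ∧ f ∘ x = Pi.single i 1 := fun i => by
    have hs : Ω ∩ (x '' {i}ᶜ)ᶜ ∈ nhds (x i) :=
      (hΩ.inter (Set.toFinite _).isClosed.isOpen_compl).mem_nhds
        ⟨(y i).2, fun ⟨j, hj, h⟩ => hj (hx h)⟩
    obtain ⟨f, hfs, hfc, hf, -, hfi⟩ := exists_contDiff_tsupport_subset (n := (⊤ : ℕ∞)) hs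
    refine ⟨f, ⟨hf, hfc, fun q hq => (hfs hq).1⟩, funext fun j => ?_⟩
    obtain rfl | hj := eq_or_ne j i
    · rw [Function.comp_apply, hfi, Pi.single_eq_same]
    · rw [Pi.single_eq_of_ne hj]
      exact image_eq_zero_of_notMem_tsupport (f := f) fun h => (hfs h).2 ⟨j, hj, rfl⟩
  choose u hu hux using bump
  refine ⟨u, hu, .of_comp (LinearMap.funLeft ℝ ℝ x) ?_⟩
  rw [show LinearMap.funLeft ℝ ℝ x ∘ u = fun i => Pi.single i 1 from funext hux]
  exact Pi.linearIndependent_single_one (Fin k) ℝ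

end Admissible

theorem sum_mul_ne_zero {K α ι : Type*} [CommRing K] [Fintype ι] {u : ι → α → K}
    (hli : LinearIndependent K u) {c : ι → K} (hc : c ≠ 0) : (fun q => ∑ i, c i * u i q) ≠ 0 := by
  intro h
  refine hc (funext (Fintype.linearIndependent_iff.1 hli c ?_))
  rw [← h]
  funext q
  simp only [Finset.sum_apply, Pi.smul_apply, smul_eq_mul]

theorem exists_ne_zero_forall_sum_mul_eq_zero {K ι κ : Type*} [Field K] [Fintype ι] {S : Set κ}
    (hS : S.Finite) (hcard : S.ncard < Fintype.card ι) (β : ι → κ → K) :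
    ∃ c : ι → K, c ≠ 0 ∧ ∀ p ∈ S, ∑ i, c i * β i p = 0 := by
  have := hS.fintype
  let T : (ι → K) →ₗ[K] (S → K) := LinearMap.pi fun p => ∑ i, β i p • LinearMap.proj i
  have hT : LinearMap.ker T ≠ ⊥ := T.ker_ne_bot_of_finrank_lt <| by
    rwa [Module.finrank_fintype_fun_eq_card, Module.finrank_fintype_fun_eq_card,
      ← Nat.card_eq_fintype_card, Nat.card_coe_set_eq]
  obtain ⟨c, hc, hc0⟩ := (Submodule.ne_bot_iff _).1 hT
  refine ⟨c, hc0, fun p hp => ?_⟩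
  have h := congrFun (LinearMap.mem_ker.1 hc) ⟨p, hp⟩
  simpa only [T, LinearMap.pi_apply, LinearMap.sum_apply, LinearMap.smul_apply,
    LinearMap.proj_apply, smul_eq_mul, Pi.zero_apply, mul_comm] using h

theorem continuous_integral_sq_sum_mul {α ι : Type*} [MeasurableSpace α] {μ : Measure α}
    [Fintype ι] {v : ι → α → ℝ} (hv : ∀ i, MemLp (v i) 2 μ) :
    Continuous fun c : ι → ℝ => ∫ x, (∑ i, c i * v i x) ^ 2 ∂μ := by
  have hint : ∀ (c : ι → ℝ) i j, Integrable (fun x => c i * v i x * (c j * v j x)) μ :=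
    fun c i j => ((hv i).const_mul (c i)).integrable_mul ((hv j).const_mul (c j))
  have expand : ∀ c : ι → ℝ, ∫ x, (∑ i, c i * v i x) ^ 2 ∂μ
      = ∑ i, ∑ j, c i * c j * ∫ x, v i x * v j x ∂μ := fun c => by
    simp only [sq, Finset.sum_mul_sum]
    rw [integral_finsetSum _ fun i _ => integrable_finsetSum _ fun j _ => hint c i j]
    refine Finset.sum_congr rfl fun i _ => ?_
    rw [integral_finsetSum _ fun j _ => hint c i j]
    refine Finset.sum_congr rfl fun j _ => ?_
    rw [← integral_const_mul]
    exact integral_congr_ae (ae_of_all _ fun x => mul_mul_mul_comm _ _ _ _)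
  simp only [expand]
  fun_prop

theorem bddAbove_div_of_homogeneous {E : Type*} [NormedAddCommGroup E] [NormedSpace ℝ E]
    [ProperSpace E] {f g : E → ℝ} {d : ℕ} (hf : Continuous f) (hg : Continuous g)
    (f_smul : ∀ (t : ℝ) x, f (t • x) = t ^ d * f x)
    (g_smul : ∀ (t : ℝ) x, g (t • x) = t ^ d * g x) (hg0 : ∀ x, x ≠ 0 → g x ≠ 0) :
    BddAbove {r | ∃ x, x ≠ 0 ∧ r = f x / g x} := by
  have hcont : ContinuousOn (fun x => f x / g x) (Metric.sphere 0 1) :=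
    hf.continuousOn.div hg.continuousOn fun x hx => hg0 x (ne_zero_of_mem_unit_sphere ⟨x, hx⟩)
  refine ((isCompact_sphere (0 : E) 1).bddAbove_image hcont).mono ?_
  rintro _ ⟨x, hx, rfl⟩
  have hx' : ‖x‖ ≠ 0 := norm_ne_zero_iff.2 hx
  refine ⟨‖x‖⁻¹ • x, ?_, ?_⟩
  · rw [mem_sphere_zero_iff_norm, norm_smul, norm_inv, norm_norm, inv_mul_cancel₀ hx']
  · simp only [f_smul, g_smul]
    exact mul_div_mul_left _ _ (pow_ne_zero d (inv_ne_zero hx'))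

section MaxRayleigh

variable {Ω : Set (ℝ × ℝ)} {ι : Type*} [Fintype ι] {u : ι → ℝ × ℝ → ℝ}

/-- The maximum of the biharmonic Rayleigh quotient over the nonzero linear combinations of the
family `u`, encoded as a supremum. -/
def maxRayleigh (u : ι → ℝ × ℝ → ℝ) : ℝ :=
  sSup {r | ∃ c : ι → ℝ, c ≠ 0 ∧
    r = (∫ p, (lap (fun q => ∑ i, c i * u i q) p) ^ 2) / (∫ p, (∑ i, c i * u i p) ^ 2)}

theorem maxRayleigh_nonneg (u : ι → ℝ × ℝ → ℝ) : 0 ≤ maxRayleigh u := by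
  refine Real.sSup_nonneg ?_
  rintro _ ⟨c, -, rfl⟩
  exact div_nonneg (integral_nonneg fun _ => sq_nonneg _) (integral_nonneg fun _ => sq_nonneg _)

theorem le_maxRayleigh (hu : ∀ i, Adm Ω (u i)) (hli : LinearIndependent ℝ u) {c : ι → ℝ}
    (hc : c ≠ 0) :
    (∫ p, (lap (fun q => ∑ i, c i * u i q) p) ^ 2) / (∫ p, (∑ i, c i * u i p) ^ 2)
      ≤ maxRayleigh u := by
  have integral_smul : ∀ (v : ι → ℝ × ℝ → ℝ) (t : ℝ) (c : ι → ℝ),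
      ∫ p, (∑ i, (t • c) i * v i p) ^ 2 = t ^ 2 * ∫ p, (∑ i, c i * v i p) ^ 2 := fun v t c => by
    simp only [Pi.smul_apply, smul_eq_mul, mul_assoc, ← Finset.mul_sum, mul_pow,
      integral_const_mul]
  have hlap : ∀ c : ι → ℝ, lap (fun q => ∑ i, c i * u i q) = fun q => ∑ i, c i * lap (u i) q :=
    fun c => lap_sum_mul c fun i => (hu i).1.of_le (WithTop.coe_le_coe.2 le_top)
  refine le_csSup ?_ ⟨c, hc, rfl⟩
  simp only [hlap]
  exact bddAbove_div_of_homogeneous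
    (continuous_integral_sq_sum_mul fun i => (adm_lap (hu i)).memLp)
    (continuous_integral_sq_sum_mul fun i => (hu i).memLp) (integral_smul _) (integral_smul u)
    fun c hc => ((Adm.sum_mul c hu).integral_sq_pos (sum_mul_ne_zero hli hc)).ne'

end MaxRayleigh

section SpectralGap

variable {L M : ℝ} (hL : 0 < L) (hM : 0 < M)
include hL hM

theorem Adm.hasSum_sq_integral_mul_rectMode {w : ℝ × ℝ → ℝ}
    (hw : Adm (Set.Ioo 0 L ×ˢ Set.Ioo 0 M) w) :
    HasSum (fun p => (∫ q, w q * rectMode L M p q) ^ 2) (∫ q, w q ^ 2) := by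
  have setIntegral_mul : ∀ f : ℝ × ℝ → ℝ,
      ∫ q in Set.Ioo 0 L ×ˢ Set.Ioo 0 M, w q * f q = ∫ q, w q * f q := fun f =>
    setIntegral_eq_integral_of_forall_compl_eq_zero fun q hq => by
      rw [hw.eq_zero_of_notMem hq, zero_mul]
  have h := (isParsevalFrame_rectMode hL hM).hasSum (hw.memLp.restrict _)
  simp only [sq (w _), setIntegral_mul] at h ⊢
  exact h

theorem sq_mul_integral_sq_lt_integral_lap_sq {w : ℝ × ℝ → ℝ}
    (hw : Adm (Set.Ioo 0 L ×ˢ Set.Ioo 0 M) w) (h0 : w ≠ 0) {s : ℝ} (hs : 0 ≤ s)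
    (hlow : ∀ p ∈ lowModes L M s, ∫ q, w q * rectMode L M p q = 0) :
    s ^ 2 * ∫ q, w q ^ 2 < ∫ q, lap w q ^ 2 := by
  have hw2 : ContDiff ℝ 2 w := hw.1.of_le (WithTop.coe_le_coe.2 le_top)
  have coeff_lap : ∀ p, ∫ q, lap w q * rectMode L M p q
      = -(rectEigenvalue L M p * ∫ q, w q * rectMode L M p q) := fun p => by
    rw [integral_lap_mul hw2 hw.2.1 (contDiff_rectMode L M p), lap_rectMode,
      ← integral_const_mul, ← integral_neg]
    exact integral_congr_ae (.of_forall fun q => by ring)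
  have hsum := hw.hasSum_sq_integral_mul_rectMode hL hM
  have hsum_lap := (adm_lap hw).hasSum_sq_integral_mul_rectMode hL hM
  simp only [coeff_lap, neg_sq, mul_pow] at hsum_lap
  have lt_eigenvalue : ∀ p, ∫ q, w q * rectMode L M p q ≠ 0 → s < rectEigenvalue L M p :=
    fun p hp => lt_of_not_ge fun h => hp (hlow p h)
  obtain ⟨p₀, hp₀⟩ : ∃ p, ∫ q, w q * rectMode L M p q ≠ 0 := by
    by_contra! h
    simp only [h, zero_pow two_ne_zero] at hsum
    exact (hw.integral_sq_pos h0).ne' (hsum.unique hasSum_zero)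
  refine hasSum_lt (i := p₀) (fun p => ?_) ?_ (hsum.mul_left (s ^ 2)) hsum_lap
  · by_cases hp : ∫ q, w q * rectMode L M p q = 0
    · simp only [hp, zero_pow two_ne_zero, mul_zero, le_refl]
    · have := lt_eigenvalue p hp
      gcongr
  · have := lt_eigenvalue p₀ hp₀
    gcongr

theorem card_le_ncard_lowModes {ι : Type*} [Fintype ι] {u : ι → ℝ × ℝ → ℝ}
    (hu : ∀ i, Adm (Set.Ioo 0 L ×ˢ Set.Ioo 0 M) (u i)) (hli : LinearIndependent ℝ u) :
    Fintype.card ι ≤ (lowModes L M √(maxRayleigh u)).ncard := by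
  by_contra! hcard
  obtain ⟨c, hc, hlow⟩ := exists_ne_zero_forall_sum_mul_eq_zero
    (finite_lowModes hL hM _) hcard fun i p => ∫ q, u i q * rectMode L M p q
  have hw := Adm.sum_mul c hu
  have hw0 := sum_mul_ne_zero hli hc
  have hint : ∀ p i, Integrable fun q => c i * (u i q * rectMode L M p q) := fun p i =>
    (((hu i).1.continuous.mul (contDiff_rectMode (m := 0) L M p).continuous)
      |>.integrable_of_hasCompactSupport (hu i).2.1.mul_right).const_mul _
  have coeff_eq : ∀ p, ∫ q, (∑ i, c i * u i q) * rectMode L M p q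
      = ∑ i, c i * ∫ q, u i q * rectMode L M p q := fun p => by
    simp only [Finset.sum_mul, mul_assoc, ← integral_const_mul]
    exact integral_finsetSum _ fun i _ => hint p i
  have hgap := sq_mul_integral_sq_lt_integral_lap_sq hL hM hw hw0 (Real.sqrt_nonneg _)
    fun p hp => (coeff_eq p).trans (hlow p hp)
  rw [Real.sq_sqrt (maxRayleigh_nonneg u), ← lt_div_iff₀ (hw.integral_sq_pos hw0)] at hgap
  exact (le_maxRayleigh hu hli hc).not_gt hgap

theorem polya_bound_maxRayleigh {ι : Type*} [Fintype ι] {u : ι → ℝ × ℝ → ℝ}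
    (hu : ∀ i, Adm (Set.Ioo 0 L ×ˢ Set.Ioo 0 M) (u i)) (hli : LinearIndependent ℝ u) :
    4 * π * Fintype.card ι / (L * M) + 2 * (1 / M) * maxRayleigh u ^ ((1 : ℝ) / 4)
        - 4 * √(2 * π) / (3 * √3) * (1 / M) ^ ((3 : ℝ) / 2) * maxRayleigh u ^ ((1 : ℝ) / 8)
      ≤ maxRayleigh u ^ ((1 : ℝ) / 2) := by
  have hcount := four_pi_mul_ncard_lowModes_le hL hM (Real.sqrt_nonneg (maxRayleigh u))
  have hcard : 4 * π * Fintype.card ι / (L * M)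
      ≤ 4 * π * (lowModes L M √(maxRayleigh u)).ncard / (L * M) := by
    gcongr
    exact card_le_ncard_lowModes hL hM hu hli
  have sqrt_rpow : ∀ y : ℝ, √(maxRayleigh u ^ y) = maxRayleigh u ^ (y * (1 / 2)) := fun y => by
    rw [Real.sqrt_eq_rpow, Real.rpow_mul (maxRayleigh_nonneg u)]
  have h4 : (1 : ℝ) / 2 * (1 / 2) = 1 / 4 := by norm_num
  have h8 : (1 : ℝ) / 4 * (1 / 2) = 1 / 8 := by norm_num
  rw [Real.sqrt_eq_rpow (maxRayleigh u)] at hcard hcount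
  rw [sqrt_rpow, h4, sqrt_rpow, h8] at hcount
  linarith

end SpectralGap

/-- The `k`-th Dirichlet eigenvalue of the biharmonic operator on a plane domain `Ω`, by the
min-max principle; `lamk k a` is the case `Ω = Rect a`. For `k = 0` the maximum is over the empty
set and the value is the junk value `0`. -/
def dirichletBiharmonicEigenvalue (Ω : Set (ℝ × ℝ)) (k : ℕ) : ℝ :=
  sInf {μ | ∃ u : Fin k → (ℝ × ℝ → ℝ), (∀ i, Adm Ω (u i)) ∧ LinearIndependent ℝ u ∧
    μ = maxRayleigh u}

theorem dirichletBiharmonicEigenvalue_mem_closure {Ω : Set (ℝ × ℝ)} (hΩ : IsOpen Ω)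
    (hne : Ω.Nonempty) (k : ℕ) :
    dirichletBiharmonicEigenvalue Ω k ∈ closure {μ | ∃ u : Fin k → (ℝ × ℝ → ℝ),
      (∀ i, Adm Ω (u i)) ∧ LinearIndependent ℝ u ∧ μ = maxRayleigh u} := by
  obtain ⟨u, hu, hli⟩ := exists_linearIndependent_adm hΩ hne k
  refine csInf_mem_closure ⟨_, u, hu, hli, rfl⟩ ⟨0, ?_⟩
  rintro _ ⟨u, -, -, rfl⟩
  exact maxRayleigh_nonneg u

theorem biharmonic_eigenvalue_polya_type_bound_general {L M : ℝ} (hL : 0 < L) (hM : 0 < M)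
    {k : ℕ} (_hk : 1 ≤ k) :
    dirichletBiharmonicEigenvalue (Set.Ioo 0 L ×ˢ Set.Ioo 0 M) k ^ ((1 : ℝ) / 2) ≥
      4 * π * k / (L * M)
        + 2 * (1 / M) * dirichletBiharmonicEigenvalue (Set.Ioo 0 L ×ˢ Set.Ioo 0 M) k
            ^ ((1 : ℝ) / 4)
        - 4 * √(2 * π) / (3 * √3) * (1 / M) ^ ((3 : ℝ) / 2)
            * dirichletBiharmonicEigenvalue (Set.Ioo 0 L ×ˢ Set.Ioo 0 M) k ^ ((1 : ℝ) / 8) := by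
  have hclosed : IsClosed {σ : ℝ | 4 * π * k / (L * M) + 2 * (1 / M) * σ ^ ((1 : ℝ) / 4)
      - 4 * √(2 * π) / (3 * √3) * (1 / M) ^ ((3 : ℝ) / 2) * σ ^ ((1 : ℝ) / 8)
      ≤ σ ^ ((1 : ℝ) / 2)} :=
    isClosed_le
      (((Real.continuous_rpow_const (by norm_num)).const_mul _).const_add _ |>.sub
        ((Real.continuous_rpow_const (by norm_num)).const_mul _))
      (Real.continuous_rpow_const (by norm_num))
  refine closure_minimal ?_ hclosed (dirichletBiharmonicEigenvalue_mem_closure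
    (isOpen_Ioo.prod isOpen_Ioo) ((Set.nonempty_Ioo.2 hL).prod (Set.nonempty_Ioo.2 hM)) k)
  rintro _ ⟨u, hu, hli, rfl⟩
  simpa only [Fintype.card_fin, Set.mem_ofPred_eq] using polya_bound_maxRayleigh hL hM hu hli

/-- Improved Pólya-type lower bound:
`λ_k(a)^{1/2} ≥ 4πk + 2a·λ_k(a)^{1/4} − (4√(2π)/(3√3))·a^{3/2}·λ_k(a)^{1/8}`. -/
theorem biharmonic_eigenvalue_polya_type_bound (a : ℝ) (ha : 1 ≤ a)
    (k : ℕ) (hk : 1 ≤ k) :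
    (lamk k a) ^ ((1 : ℝ) / 2) ≥
      4 * π * k + 2 * a * (lamk k a) ^ ((1 : ℝ) / 4)
        - (4 * Real.sqrt (2 * π) / (3 * Real.sqrt 3)) * a ^ ((3 : ℝ) / 2)
            * (lamk k a) ^ ((1 : ℝ) / 8) := by
  have ha0 : 0 < a := one_pos.trans_le ha
  have h := biharmonic_eigenvalue_polya_type_bound_general ha0 (one_div_pos.2 ha0) hk
  rwa [one_div_one_div, mul_one_div_cancel ha0.ne', div_one] at h
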